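/- arXiv:2604.11366 — 2 statements merged into one kernel-verified Lean document; each statement's English description precedes it below -/
import Mathlib

section
/- For every odd integer t ≥ 1 and every ε > 0 there exists N such that for all n ≥ N there exists a graph G on n vertices containing no subgraph isomorphic to B_t with e(G) ≥ (√⌊(t+1)/2⌋/2 − ε)·n^{3/2}. (That is, ex(n, B_t) ≥ (√⌊(t+1)/2⌋/2)(1+o(1))·n^{3/2} for odd t.) -/
open SimpleGraph

/-- `F` is contained in `G` as a subgraph: there is an injective map preserving adjacency. -/
def ContainsCopy {α β : Type*} (F : SimpleGraph α) (G : SimpleGraph β) : Prop :=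
  ∃ f : α → β, Function.Injective f ∧ ∀ ⦃a b : α⦄, F.Adj a b → G.Adj (f a) (f b)

/-- `Bgraph t = K₂ □ S_t`, the Cartesian product of an edge and a star with `t` edges. -/
def Bgraph (t : ℕ) : SimpleGraph (Fin 2 × (Fin 1 ⊕ Fin t)) :=
  (⊤ : SimpleGraph (Fin 2)).boxProd (completeBipartiteGraph (Fin 1) (Fin t))

/-!
In a `C₄`-free graph a page of `B_t` must degenerate. Blow up every vertex into `k` independent
copies and project a copy of `B_t` with spine `uv` back to the original graph: each page
`u, U i, V i, v` is a closed walk of length 4, so `V i` projects to the image of `u` or `U i` to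
that of `v`. Each of these happens for at most `k - 1` pages, whence `t ≤ 2 (k - 1)`. Blowing up the
parabola graph over the field with `q` elements gives `k q²` vertices and about `k² q³ / 2` edges.

To reach every large `n` one needs prime powers `q` with `q / √(n / k) → 1`. These come from a weak
form of the Wiener–Ikehara theorem for the Dirichlet series `∑ Λ n n⁻ˢ`: if no prime power had
logarithm within `δ` of `y`, then testing the series on the line `re s = 1` against a function `f`
with `f 0 > 0` whose Fourier transform is nonpositive off `(-δ, δ)`, modulated by `y`, would give a
nonpositive value. By the Riemann–Lebesgue lemma the regular part disappears as `y → ∞`, and the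
pole at `s = 1` contributes `∫ 𝓕 f = f 0 > 0`.
-/

section Graphs

variable {V W ι : Type*}

/-- `G` contains no 4-cycle, expressed as: distinct vertices have at most one common neighbour. -/
def IsC4Free (G : SimpleGraph V) : Prop :=
  ∀ ⦃p q⦄, p ≠ q → (G.commonNeighbors p q).Subsingleton

/-- The blow-up of `G`: every vertex is replaced by an independent set indexed by `ι`, every edge
by a complete bipartite graph. -/
def blowup (G : SimpleGraph V) (ι : Type*) : SimpleGraph (V × ι) :=
  G.comap Prod.fst

lemma card_add_one_le_of_fst_eq [Fintype ι] {J : Type*} {s : Finset J} {w : V × ι} {X : J → V × ι}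
    (hX : Function.Injective X) (hw : ∀ j, X j ≠ w) (hs : ∀ j ∈ s, (X j).1 = w.1) :
    s.card + 1 ≤ Fintype.card ι := by
  classical
  have hmaps : ∀ j ∈ s, (X j).2 ∈ Finset.univ.erase w.2 := fun j hj ↦
    Finset.mem_erase.mpr ⟨fun h ↦ hw j (Prod.ext (hs j hj) h), Finset.mem_univ _⟩
  have hinj : Set.InjOn (fun j ↦ (X j).2) s := fun i hi j hj h ↦
    hX (Prod.ext ((hs i hi).trans (hs j hj).symm) h)
  have hcard := Finset.card_le_card_of_injOn _ hmaps hinj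
  rw [Finset.card_erase_of_mem (Finset.mem_univ _), Finset.card_univ] at hcard
  have : 0 < Fintype.card ι := Fintype.card_pos_iff.mpr ⟨w.2⟩
  omega

lemma IsC4Free.le_of_containsCopy_blowup [Fintype ι] {G : SimpleGraph V} (hG : IsC4Free G) {t : ℕ}
    (h : ContainsCopy (Bgraph t) (blowup G ι)) : t + 2 ≤ 2 * Fintype.card ι := by
  classical
  obtain ⟨f, hinj, hadj⟩ := h
  let u := f (0, .inl 0)
  let v := f (1, .inl 0)
  let U (i : Fin t) := f (0, .inr i)
  let V (i : Fin t) := f (1, .inr i)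
  have huv : G.Adj u.1 v.1 := hadj (by simp [Bgraph])
  have huU (i) : G.Adj u.1 (U i).1 := hadj (by simp [Bgraph])
  have hVv (i) : G.Adj (V i).1 v.1 := hadj (by simp [Bgraph])
  have hVU (i) : G.Adj (V i).1 (U i).1 := hadj (by simp [Bgraph])
  have hpage (i) (hi : (V i).1 ≠ u.1) : (U i).1 = v.1 :=
    hG hi.symm ⟨huU i, hVU i⟩ ⟨huv, hVv i⟩
  have hV := card_add_one_le_of_fst_eq (s := {i | (V i).1 = u.1}) (X := V) (w := u)
    (fun i j hij ↦ by simpa using hinj hij) (fun i hi ↦ by simpa using hinj hi) (by simp)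
  have hU := card_add_one_le_of_fst_eq (s := {i | ¬(V i).1 = u.1}) (X := U) (w := v)
    (fun i j hij ↦ by simpa using hinj hij) (fun i hi ↦ by simpa using hinj hi)
    (by simpa using hpage)
  have hsplit := Finset.card_filter_add_card_filter_not (s := .univ) fun i ↦ (V i).1 = u.1
  rw [Finset.card_univ, Fintype.card_fin] at hsplit
  omega

lemma mul_card_le_two_mul_ncard_edgeSet [Fintype V] {G : SimpleGraph V} {d : ℕ}
    (hd : ∀ v, d ≤ (G.neighborSet v).ncard) : d * Fintype.card V ≤ 2 * G.edgeSet.ncard := by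
  classical
  rw [← coe_edgeFinset, Set.ncard_coe_finset, ← sum_degrees_eq_twice_card_edges, mul_comm,
    ← smul_eq_mul, ← Finset.card_univ]
  refine Finset.card_nsmul_le_sum _ _ _ fun v _ ↦ ?_
  rw [← card_neighborFinset_eq_degree, ← Set.ncard_coe_finset, coe_neighborFinset]
  exact hd v

lemma ncard_neighborSet_blowup (G : SimpleGraph V) (x : V × ι) :
    ((blowup G ι).neighborSet x).ncard = (G.neighborSet x.1).ncard * Nat.card ι := by
  have : (blowup G ι).neighborSet x = G.neighborSet x.1 ×ˢ Set.univ := by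
    ext; simp [blowup]
  rw [this, Set.ncard_prod, Set.ncard_univ]

/-- The parabola graph on the plane `R × R`: the points `(a, b)` and `(c, d)` are joined when
`a * c = b + d`, that is, when `(c, d)` lies on the line of slope `a` through `(0, -b)`. -/
def parabolaGraph (R : Type*) [CommRing R] : SimpleGraph (R × R) where
  Adj p q := p ≠ q ∧ p.1 * q.1 = p.2 + q.2
  symm := ⟨fun _ _ h ↦ ⟨h.1.symm, by rw [mul_comm, h.2, add_comm]⟩⟩
  loopless := ⟨fun _ h ↦ h.1 rfl⟩

lemma isC4Free_parabolaGraph (R : Type*) [CommRing R] [NoZeroDivisors R] :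
    IsC4Free (parabolaGraph R) := by
  rintro p q hpq r ⟨⟨_, hpr⟩, ⟨_, hqr⟩⟩ s ⟨⟨_, hps⟩, ⟨_, hqs⟩⟩
  have hmul : (p.1 - q.1) * (r.1 - s.1) = 0 := by linear_combination hpr - hqr - hps + hqs
  rcases mul_eq_zero.mp hmul with h | h <;> rw [sub_eq_zero] at h
  · refine absurd (Prod.ext h ?_) hpq
    linear_combination r.1 * h - hpr + hqr
  · refine Prod.ext h ?_
    linear_combination p.1 * h - hpr + hps

lemma card_sub_one_le_ncard_neighborSet_parabolaGraph (R : Type*) [CommRing R] [Finite R]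
    (p : R × R) : Nat.card R - 1 ≤ ((parabolaGraph R).neighborSet p).ncard := by
  let φ (c : R) : R × R := (c, p.1 * c - p.2)
  have hφ : Function.Injective φ := fun _ _ h ↦ congrArg Prod.fst h
  have hsub : φ '' {p.1}ᶜ ⊆ (parabolaGraph R).neighborSet p := by
    rintro _ ⟨c, hc, rfl⟩
    exact ⟨fun h ↦ hc (congrArg Prod.fst h).symm, by simp [φ]⟩
  calc Nat.card R - 1 = (φ '' {p.1}ᶜ).ncard := by
        rw [Set.ncard_image_of_injective _ hφ, Set.ncard_compl, Set.ncard_singleton]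
    _ ≤ _ := Set.ncard_le_ncard hsub

lemma le_two_mul_ncard_edgeSet_blowup_parabolaGraph (R ι : Type*) [CommRing R] [Finite R]
    [Finite ι] :
    Nat.card ι ^ 2 * (Nat.card R ^ 2 * (Nat.card R - 1))
      ≤ 2 * (blowup (parabolaGraph R) ι).edgeSet.ncard := by
  have : Fintype (R × R) := .ofFinite _
  have : Fintype ((R × R) × ι) := .ofFinite _
  refine le_trans (le_of_eq ?_) (mul_card_le_two_mul_ncard_edgeSet fun x ↦
    (Nat.mul_le_mul_right _ (card_sub_one_le_ncard_neighborSet_parabolaGraph R x.1)).trans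
      (ncard_neighborSet_blowup _ x).ge)
  rw [← Nat.card_eq_fintype_card, Nat.card_prod, Nat.card_prod]
  ring

lemma containsCopy_of_containsCopy_map {F : SimpleGraph ι} {G : SimpleGraph V} (e : V ↪ W)
    (hF : ∀ a, ∃ b, F.Adj a b) (h : ContainsCopy F (G.map e)) : ContainsCopy F G := by
  obtain ⟨f, hinj, hadj⟩ := h
  have hrange (a : ι) : ∃ v, e v = f a := by
    obtain ⟨b, hab⟩ := hF a
    obtain ⟨v, _, _, hv, _⟩ := (map_adj ..).mp (hadj hab)
    exact ⟨v, hv⟩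
  choose g hg using hrange
  refine ⟨g, fun a b hab ↦ hinj ?_, fun a b hab ↦ ?_⟩
  · rw [← hg, ← hg, hab]
  · simpa only [← hg, map_adj_apply] using hadj hab

lemma exists_Bgraph_adj {t : ℕ} (ht : 1 ≤ t) (x : Fin 2 × (Fin 1 ⊕ Fin t)) :
    ∃ y, (Bgraph t).Adj x y := by
  obtain ⟨a, i | i⟩ := x
  · exact ⟨(a, .inr ⟨0, ht⟩), by simp [Bgraph]⟩
  · exact ⟨(a, .inl 0), by simp [Bgraph]⟩

lemma ncard_edgeSet_map (G : SimpleGraph V) (e : V ↪ W) :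
    (G.map e).edgeSet.ncard = G.edgeSet.ncard := by
  rw [edgeSet_map, Set.ncard_image_of_injective _ e.sym2Map.injective]

theorem exists_not_containsCopy_Bgraph_of_isPrimePow {t k n q : ℕ} (ht : 1 ≤ t)
    (hkt : 2 * k ≤ t + 1) (hq : IsPrimePow q) (hn : k * q ^ 2 ≤ n) :
    ∃ G : SimpleGraph (Fin n), ¬ ContainsCopy (Bgraph t) G ∧
      k ^ 2 * (q ^ 2 * (q - 1)) ≤ 2 * G.edgeSet.ncard := by
  obtain ⟨p, m, hp, hm, rfl⟩ := hq
  have : Fact p.Prime := ⟨hp.nat_prime⟩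
  let F := GaloisField p m
  have : Fintype F := .ofFinite F
  have hF : Nat.card F = p ^ m := GaloisField.card p m hm.ne'
  obtain ⟨e⟩ : Nonempty ((F × F) × Fin k ↪ Fin n) := by
    refine Function.Embedding.nonempty_of_card_le ?_
    rw [← Nat.card_eq_fintype_card, Nat.card_prod, Nat.card_prod, Nat.card_fin, hF,
      Fintype.card_fin]
    linarith
  refine ⟨(blowup (parabolaGraph F) (Fin k)).map e, fun hcopy ↦ ?_, ?_⟩
  · have := (isC4Free_parabolaGraph F).le_of_containsCopy_blowup
      (containsCopy_of_containsCopy_map e (exists_Bgraph_adj ht) hcopy)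
    rw [Fintype.card_fin] at this
    omega
  · rw [ncard_edgeSet_map, ← hF]
    simpa using le_two_mul_ncard_edgeSet_blowup_parabolaGraph F (Fin k)

end Graphs

open MeasureTheory Filter Topology Real FourierTransform SchwartzMap
open scoped Convolution ComplexConjugate ComplexOrder

section Kernel

lemma fourier_ofReal_comp_neg (φ : ℝ → ℝ) (u : ℝ) :
    𝓕 (fun t ↦ (φ (-t) : ℂ)) u = conj (𝓕 (fun t ↦ (φ t : ℂ)) u) := by
  rw [fourier_real_eq, fourier_real_eq, ← integral_conj, ← integral_neg_eq_self]
  congr! 2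
  simp [Circle.smul_def, ← Circle.coe_inv_eq_conj, ← AddChar.map_neg_eq_inv]

lemma fourier_comp_div (f : ℝ → ℂ) {R : ℝ} (hR : 0 < R) (u : ℝ) :
    𝓕 (fun t ↦ f (t / R)) u = R * 𝓕 f (R * u) := by
  have hscale := Measure.integral_comp_div (fun t ↦ 𝐞 (-(t * (R * u))) • f t) R
  rw [abs_of_pos hR, Complex.real_smul, ← fourier_real_eq] at hscale
  rw [← hscale, fourier_real_eq]
  congr! 4
  field_simp

lemma fourier_fourierChar_smul (f : ℝ → ℂ) (y u : ℝ) :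
    𝓕 (fun t ↦ 𝐞 (t * y) • f t) u = 𝓕 f (u - y) := by
  simp_rw [fourier_real_eq, smul_smul, ← AddChar.map_add_eq_mul]
  congr! 4
  ring

lemma exists_schwartz_fourier_re_nonneg :
    ∃ g : 𝓢(ℝ, ℂ), HasCompactSupport g ∧ 0 < (g 0).re ∧ ∀ u, 0 ≤ (𝓕 g u).re := by
  let b : ContDiffBump (0 : ℝ) := ⟨1, 2, one_pos, one_lt_two⟩
  have hb : HasCompactSupport fun t ↦ (b t : ℂ) := b.hasCompactSupport.comp_left Complex.ofReal_zero
  let φ : 𝓢(ℝ, ℂ) := hb.toSchwartzMap (Complex.ofRealCLM.contDiff.comp b.contDiff)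
  have fourier_conj (u : ℝ) : conj (𝓕 φ u) = 𝓕 φ u := by
    have := fourier_ofReal_comp_neg b u
    simp only [b.neg] at this
    exact this.symm
  -- `𝓕 φ` is real because `φ` is even, so `𝓕 (φ ⋆ φ)` is the square of a real function.
  let g := SchwartzMap.convolution (ContinuousLinearMap.mul ℂ ℂ) φ φ
  have hg : ⇑g = φ ⋆[ContinuousLinearMap.mul ℂ ℂ] φ :=
    funext (SchwartzMap.convolution_apply (ContinuousLinearMap.mul ℂ ℂ) φ φ)
  refine ⟨g, hg ▸ HasCompactSupport.convolution _ hb hb, ?_, fun u ↦ ?_⟩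
  · have : g 0 = ((∫ t, b t ^ 2 : ℝ) : ℂ) := by
      rw [hg, MeasureTheory.convolution_def, ← integral_complex_ofReal]
      congr! 2 with t
      rw [zero_sub, ContinuousLinearMap.mul_apply', sq, Complex.ofReal_mul]
      congr 1
      exact congrArg Complex.ofReal (b.neg t)
    rw [this, Complex.ofReal_re]
    exact (b.continuous.pow 2).integral_pos_of_hasCompactSupport_nonneg_nonzero
      (b.hasCompactSupport.comp_left (g := (· ^ 2)) (by simp)) (fun t ↦ sq_nonneg _)
      (x := 0) (by simp [b.one_of_mem_closedBall, b.rIn_pos.le])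
  · rw [SchwartzMap.fourier_convolution_apply,
      Real.fourier_mul_convolution_eq φ.integrable φ.integrable, ← SchwartzMap.fourier_coe]
    nth_rw 1 [← fourier_conj]
    rw [← Complex.normSq_eq_conj_mul_self, Complex.ofReal_re]
    exact Complex.normSq_nonneg _

lemma fourier_derivCLM (g : 𝓢(ℝ, ℂ)) (u : ℝ) :
    𝓕 (derivCLM ℂ ℂ g) u = 2 * π * Complex.I * u * 𝓕 g u :=
  congrFun (Real.fourier_deriv g.integrable g.differentiable (derivCLM ℂ ℂ g).integrable) u

lemma exists_schwartz_fourier_re_nonpos :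
    ∃ f : 𝓢(ℝ, ℂ), ∃ C > 0, HasCompactSupport f ∧ 0 < (f 0).re ∧
      ∀ u, C ≤ |u| → (𝓕 f u).re ≤ 0 := by
  obtain ⟨g, hg, hg0, hgF⟩ := exists_schwartz_fourier_re_nonneg
  let g₂ := derivCLM ℂ ℂ (derivCLM ℂ ℂ g)
  have hlim : Tendsto (fun C : ℝ ↦ 4 * π ^ 2 * C ^ 2 * (g 0).re + (g₂ 0).re) atTop atTop :=
    tendsto_atTop_add_const_right _ _ <|
      ((tendsto_pow_atTop two_ne_zero).const_mul_atTop (by positivity)).atTop_mul_const hg0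
  obtain ⟨C, hC, hC0⟩ := ((hlim.eventually_gt_atTop 0).and (eventually_gt_atTop 0)).exists
  -- `𝓕 f u` is `4 π² (C² - u²) 𝓕 g u`, since two derivatives multiply `𝓕 g u` by `-4 π² u²`.
  let f : 𝓢(ℝ, ℂ) := ((4 * π ^ 2 * C ^ 2 : ℝ) : ℂ) • g + g₂
  have hfourier (u : ℝ) : 𝓕 f u = ((4 * π ^ 2 * (C ^ 2 - u ^ 2) : ℝ) : ℂ) * 𝓕 g u := by
    simp only [f, g₂, FourierTransform.fourier_add, FourierTransform.fourier_smul,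
      _root_.add_apply, _root_.smul_apply, smul_eq_mul, fourier_derivCLM]
    push_cast
    linear_combination (4 * π ^ 2 * u ^ 2 * 𝓕 g u) * Complex.I_sq
  refine ⟨f, C, hC0, hg.smul_left.add hg.deriv.deriv, ?_, fun u hu ↦ ?_⟩
  · rwa [_root_.add_apply, _root_.smul_apply, smul_eq_mul, Complex.add_re,
      Complex.re_ofReal_mul]
  · rw [hfourier, Complex.re_ofReal_mul]
    have : C ^ 2 ≤ u ^ 2 := by rw [← sq_abs u]; gcongr
    exact mul_nonpos_of_nonpos_of_nonneg
      (mul_nonpos_of_nonneg_of_nonpos (by positivity) (by linarith)) (hgF u)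

lemma exists_fourier_re_nonpos_of_le_abs {δ : ℝ} (hδ : 0 < δ) :
    ∃ f : ℝ → ℂ, Continuous f ∧ HasCompactSupport f ∧ Integrable (𝓕 f) ∧ 0 < (f 0).re ∧
      ∀ u, δ ≤ |u| → (𝓕 f u).re ≤ 0 := by
  obtain ⟨f, C, hC, hf, hf0, hfF⟩ := exists_schwartz_fourier_re_nonpos
  obtain ⟨R, hR, rfl⟩ : ∃ R > 0, R * δ = C := ⟨C / δ, by positivity, by field_simp⟩
  have hfourier : 𝓕 (fun t ↦ f (t / R)) = fun u ↦ (R : ℂ) * (𝓕 f) (R * u) :=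
    funext (fourier_comp_div f hR)
  have hsupp : HasCompactSupport fun t ↦ f (t / R) := by
    simp only [div_eq_inv_mul]
    exact hf.comp_homeomorph (Homeomorph.mulLeft₀ R⁻¹ (inv_ne_zero hR.ne'))
  have hint : Integrable (𝓕 fun t ↦ f (t / R)) := by
    rw [hfourier]
    exact ((𝓕 f).integrable.comp_mul_left' hR.ne').const_mul (R : ℂ)
  refine ⟨fun t ↦ f (t / R), f.continuous.comp (continuous_id.div_const R), hsupp, hint,
    by simpa only [zero_div] using hf0, fun u hu ↦ ?_⟩
  rw [hfourier, Complex.re_ofReal_mul]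
  refine mul_nonpos_of_nonneg_of_nonpos hR.le (hfF _ ?_)
  rw [abs_mul, abs_of_pos hR]
  gcongr

end Kernel

section WienerIkehara

lemma term_add_two_pi_mul_I (A : ℕ → ℂ) (s : ℂ) (t : ℝ) (n : ℕ) :
    LSeries.term A (s + 2 * π * t * Complex.I) n
      = 𝐞 (-(t * Real.log n)) • LSeries.term A s n := by
  rcases eq_or_ne n 0 with rfl | hn
  · simp
  have hn' : (n : ℂ) ≠ 0 := Nat.cast_ne_zero.mpr hn
  rw [LSeries.term_of_ne_zero hn, LSeries.term_of_ne_zero hn, Complex.cpow_add _ _ hn',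
    Circle.smul_def, fourierChar_apply, smul_eq_mul, mul_neg, Complex.ofReal_neg, neg_mul,
    Complex.exp_neg, Complex.cpow_def_of_ne_zero hn' (2 * π * t * Complex.I), ← Complex.natCast_log,
    div_mul_eq_div_div, div_eq_inv_mul]
  congr 3
  push_cast
  ring

variable {A : ℕ → ℂ} {G : ℂ → ℂ} {c : ℝ} {f : ℝ → ℂ}

lemma integral_mul_LSeries {s : ℂ} (hA : LSeriesSummable A s) (hf : Integrable f) :
    ∫ t : ℝ, f t * LSeries A (s + 2 * π * t * Complex.I)
      = ∑' n, LSeries.term A s n * 𝓕 f (Real.log n) := by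
  have hterm (n : ℕ) (t : ℝ) : f t * LSeries.term A (s + 2 * π * t * Complex.I) n
      = LSeries.term A s n * 𝐞 (-(t * Real.log n)) • f t := by
    rw [term_add_two_pi_mul_I, mul_smul_comm, mul_smul_comm, mul_comm (f t)]
  have hnorm (n : ℕ) : ∫ t, ‖LSeries.term A s n * 𝐞 (-(t * Real.log n)) • f t‖
      = ‖LSeries.term A s n‖ * ∫ t, ‖f t‖ := by
    simp only [norm_mul, Circle.norm_smul, integral_const_mul]
  have hint (n : ℕ) : Integrable fun t ↦ LSeries.term A s n * 𝐞 (-(t * Real.log n)) • f t := by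
    have := (Real.fourierIntegral_convergent_iff (Real.log n)).mpr hf
    simp only [RCLike.inner_apply', conj_trivial] at this
    exact this.const_mul _
  have hsum : Summable fun n ↦ ∫ t, ‖LSeries.term A s n * 𝐞 (-(t * Real.log n)) • f t‖ := by
    simpa only [hnorm] using hA.norm.mul_right _
  calc ∫ t : ℝ, f t * LSeries A (s + 2 * π * t * Complex.I)
      = ∫ t, ∑' n, LSeries.term A s n * 𝐞 (-(t * Real.log n)) • f t := by
        simp only [LSeries, ← tsum_mul_left, hterm]
    _ = ∑' n, ∫ t, LSeries.term A s n * 𝐞 (-(t * Real.log n)) • f t :=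
        (integral_tsum_of_summable_integral_norm hint hsum).symm
    _ = ∑' n, LSeries.term A s n * 𝓕 f (Real.log n) := by
        simp only [integral_const_mul, fourier_real_eq]

lemma integral_mul_inv_add_two_pi_mul_I (hf : Integrable f) {a : ℝ} (ha : 0 < a) :
    ∫ t : ℝ, f t * (a + 2 * π * t * Complex.I)⁻¹
      = ∫ v in Set.Ioi (0 : ℝ), Real.exp (-a * v) * 𝓕 f v := by
  have hinv (t : ℝ) : (a + 2 * π * t * Complex.I)⁻¹
      = ∫ v in Set.Ioi (0 : ℝ), Complex.exp (-(a + 2 * π * t * Complex.I) * v) := by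
    rw [integral_exp_mul_complex_Ioi (by simpa using ha)]
    simp only [Complex.ofReal_zero, mul_zero, Complex.exp_zero, neg_div_neg_eq, one_div]
  have hswap (t v : ℝ) : f t * Complex.exp (-(a + 2 * π * t * Complex.I) * v)
      = Real.exp (-a * v) * 𝐞 (-(t * v)) • f t := by
    rw [Circle.smul_def, fourierChar_apply, smul_eq_mul, ← mul_assoc, Complex.ofReal_exp,
      ← Complex.exp_add, mul_comm]
    congr 2
    push_cast
    ring
  have hint : Integrable (fun z : ℝ × ℝ ↦ (Real.exp (-a * z.2) : ℂ) * 𝐞 (-(z.1 * z.2)) • f z.1)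
      (volume.prod (volume.restrict (Set.Ioi 0))) := by
    have hexp : Integrable (fun v ↦ Real.exp (-a * v)) (volume.restrict (Set.Ioi 0)) :=
      integrableOn_exp_mul_Ioi (neg_neg_of_pos ha) 0
    refine (hf.norm.mul_prod hexp).mono' ?_ (Eventually.of_forall fun z ↦ ?_)
    · have hexp_cont : Continuous fun z : ℝ × ℝ ↦ (Real.exp (-a * z.2) : ℂ) := by fun_prop
      have hchar_cont : Continuous fun z : ℝ × ℝ ↦ 𝐞 (-(z.1 * z.2)) := by fun_prop
      exact hexp_cont.aestronglyMeasurable.mul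
        (hchar_cont.aestronglyMeasurable.smul hf.aestronglyMeasurable.comp_fst)
    · rw [norm_mul, Circle.norm_smul, Complex.norm_real, Real.norm_of_nonneg (Real.exp_pos _).le,
        mul_comm]
  simp only [hinv, ← integral_const_mul, hswap]
  rw [integral_integral_swap hint]
  simp only [integral_const_mul, fourier_real_eq]

lemma tendsto_setIntegral_exp_neg_mul {g : ℝ → ℂ} (hg : IntegrableOn g (Set.Ioi 0)) :
    Tendsto (fun a : ℝ ↦ ∫ v in Set.Ioi (0 : ℝ), Real.exp (-a * v) * g v) (𝓝[>] 0)
      (𝓝 (∫ v in Set.Ioi (0 : ℝ), g v)) := by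
  refine tendsto_integral_filter_of_dominated_convergence (‖g ·‖)
    (Eventually.of_forall fun a ↦ ?_) ?_ hg.norm (Eventually.of_forall fun v ↦ ?_)
  · have hexp : Continuous fun v : ℝ ↦ (Real.exp (-a * v) : ℂ) := by fun_prop
    exact hexp.aestronglyMeasurable.mul hg.aestronglyMeasurable
  · filter_upwards [self_mem_nhdsWithin] with a ha
    filter_upwards [ae_restrict_mem measurableSet_Ioi] with v hv
    rw [norm_mul, Complex.norm_real, Real.norm_of_nonneg (Real.exp_pos _).le]
    refine mul_le_of_le_one_left (norm_nonneg _) (Real.exp_le_one_iff.mpr ?_)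
    rw [neg_mul]
    exact neg_nonpos.mpr (mul_pos ha hv).le
  · have hcont : Continuous fun a : ℝ ↦ (Real.exp (-a * v) : ℂ) * g v := by fun_prop
    simpa using (hcont.tendsto 0).mono_left (nhdsWithin_le_nhds (s := Set.Ioi 0))

lemma continuousOn_integral_mul_vertical (hG : ContinuousOn G {s | 1 ≤ s.re})
    (hf : Continuous f) (hfc : HasCompactSupport f) :
    ContinuousOn (fun a : ℝ ↦ ∫ t : ℝ, f t * G (1 + a + 2 * π * t * Complex.I)) (Set.Ici 0) := by
  refine continuousOn_integral_of_compact_support hfc ?_ fun a t _ ht ↦ ?_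
  · refine (by fun_prop : Continuous fun z : ℝ × ℝ ↦ f z.2).continuousOn.mul
      (hG.comp (by fun_prop) fun z hz ↦ ?_)
    simpa using hz.1
  · rw [image_eq_zero_of_notMem_tsupport ht, zero_mul]

lemma tsum_term_mul_fourier (hA : ∀ s : ℂ, 1 < s.re → LSeriesSummable A s)
    (hG : ContinuousOn G {s | 1 ≤ s.re}) (hAG : ∀ s : ℂ, 1 < s.re → LSeries A s = G s + c / (s - 1))
    (hf : Continuous f) (hfc : HasCompactSupport f) {a : ℝ} (ha : 0 < a) :
    ∑' n, LSeries.term A (1 + a) n * 𝓕 f (Real.log n)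
      = (∫ t : ℝ, f t * G (1 + a + 2 * π * t * Complex.I))
        + c * ∫ v in Set.Ioi (0 : ℝ), Real.exp (-a * v) * 𝓕 f v := by
  have hfi : Integrable f := hf.integrable_of_hasCompactSupport hfc
  have hre (t : ℝ) : 1 < (1 + a + 2 * π * t * Complex.I).re := by simpa
  have hpole (t : ℝ) : (a + 2 * π * t * Complex.I) ≠ 0 := fun h ↦
    ha.ne' (by simpa using congrArg Complex.re h)
  have hint_pole : Integrable fun t : ℝ ↦ f t * (a + 2 * π * t * Complex.I)⁻¹ :=
    (hf.mul (Continuous.inv₀ (by fun_prop) hpole)).integrable_of_hasCompactSupport hfc.mul_right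
  have hint_G : Integrable fun t : ℝ ↦ f t * G (1 + a + 2 * π * t * Complex.I) :=
    (hf.mul (hG.comp_continuous (by fun_prop) fun t ↦
      (hre t).le)).integrable_of_hasCompactSupport hfc.mul_right
  rw [← integral_mul_LSeries (hA _ (by simpa)) hfi, ← integral_mul_inv_add_two_pi_mul_I hfi ha,
    ← integral_const_mul, ← integral_add hint_G (hint_pole.const_mul _)]
  congr! 2 with t
  rw [hAG _ (hre t)]
  ring

lemma tendsto_tsum_term_mul_fourier (hA : ∀ s : ℂ, 1 < s.re → LSeriesSummable A s)
    (hG : ContinuousOn G {s | 1 ≤ s.re}) (hAG : ∀ s : ℂ, 1 < s.re → LSeries A s = G s + c / (s - 1))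
    (hf : Continuous f) (hfc : HasCompactSupport f) (hfF : Integrable (𝓕 f)) :
    Tendsto (fun a : ℝ ↦ ∑' n, LSeries.term A (1 + a) n * 𝓕 f (Real.log n)) (𝓝[>] 0)
      (𝓝 ((∫ t : ℝ, f t * G (1 + 2 * π * t * Complex.I))
        + c * ∫ v in Set.Ioi (0 : ℝ), 𝓕 f v)) := by
  have hregular := (continuousOn_integral_mul_vertical hG hf hfc 0 Set.self_mem_Ici).mono_left
    (nhdsWithin_mono 0 Set.Ioi_subset_Ici_self)
  have hpole := (tendsto_setIntegral_exp_neg_mul hfF.integrableOn).const_mul (c : ℂ)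
  simp only [Complex.ofReal_zero, add_zero] at hregular
  refine (hregular.add hpole).congr' ?_
  filter_upwards [self_mem_nhdsWithin] with a ha
  exact (tsum_term_mul_fourier hA hG hAG hf hfc ha).symm

lemma tendsto_integral_fourierChar_smul (h : ℝ → ℂ) :
    Tendsto (fun y : ℝ ↦ ∫ t : ℝ, 𝐞 (t * y) • h t) atTop (𝓝 0) := by
  have hcocompact : Tendsto (fun y : ℝ ↦ -y) atTop (cocompact ℝ) :=
    tendsto_neg_atTop_atBot.mono_right atBot_le_cocompact
  simpa [Function.comp_def] using (Real.tendsto_integral_exp_smul_cocompact h).comp hcocompact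

lemma tendsto_setIntegral_fourier_sub (hf : Continuous f) (hfi : Integrable f)
    (hfF : Integrable (𝓕 f)) :
    Tendsto (fun y : ℝ ↦ ∫ v in Set.Ioi (0 : ℝ), 𝓕 f (v - y)) atTop (𝓝 (f 0)) := by
  have hinv : ∫ v, 𝓕 f v = f 0 := by
    rw [← congrFun (hf.fourierInv_fourier_eq hfi hfF) 0, Real.fourierInv_eq]
    simp
  rw [← hinv]
  refine ((aecover_Ioi tendsto_neg_atTop_atBot).integral_tendsto_of_countably_generated
    hfF).congr fun y ↦ ?_
  have := (measurePreserving_sub_right volume y).setIntegral_preimage_emb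
    (measurableEmbedding_subRight y) (𝓕 f) (Set.Ioi (-y))
  simpa using this.symm

lemma re_tsum_nonpos {ι : Type*} {z : ι → ℂ} (hz : ∀ i, (z i).re ≤ 0) : (∑' i, z i).re ≤ 0 := by
  by_cases h : Summable z
  · exact (Complex.re_tsum h).trans_le (tsum_nonpos hz)
  · simp [tsum_eq_zero_of_not_summable h]

theorem eventually_exists_ne_zero_abs_log_sub_lt (hA : ∀ s : ℂ, 1 < s.re → LSeriesSummable A s)
    (hA0 : 0 ≤ A) (hG : ContinuousOn G {s | 1 ≤ s.re}) (hc : 0 < c)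
    (hAG : ∀ s : ℂ, 1 < s.re → LSeries A s = G s + c / (s - 1)) {δ : ℝ} (hδ : 0 < δ) :
    ∀ᶠ y : ℝ in atTop, ∃ n, A n ≠ 0 ∧ |Real.log n - y| < δ := by
  obtain ⟨f, hf, hfc, hfF, hf0, hfδ⟩ := exists_fourier_re_nonpos_of_le_abs hδ
  have hfi : Integrable f := hf.integrable_of_hasCompactSupport hfc
  have hlim : Tendsto (fun y : ℝ ↦ (∫ t : ℝ, 𝐞 (t * y) • (f t * G (1 + 2 * π * t * Complex.I)))
      + c * ∫ v in Set.Ioi (0 : ℝ), 𝓕 f (v - y)) atTop (𝓝 (c * f 0)) := by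
    simpa using (tendsto_integral_fourierChar_smul _).add
      ((tendsto_setIntegral_fourier_sub hf hfi hfF).const_mul (c : ℂ))
  have hpos : 0 < (c * f 0).re := by
    rw [Complex.re_ofReal_mul]
    exact mul_pos hc hf0
  filter_upwards [((Complex.continuous_re.tendsto _).comp hlim).eventually_const_lt hpos] with y hy
  by_contra! hgap
  have hboundary := tendsto_tsum_term_mul_fourier hA hG hAG (f := fun t ↦ 𝐞 (t * y) • f t)
    (by fun_prop) (hfc.smul_left (f := fun t ↦ 𝐞 (t * y))) ?_
  · simp only [fourier_fourierChar_smul, smul_mul_assoc] at hboundary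
    refine hy.not_ge (le_of_tendsto ((Complex.continuous_re.tendsto _).comp hboundary)
      (Eventually.of_forall fun a ↦ re_tsum_nonpos fun n ↦ ?_))
    rcases eq_or_ne (A n) 0 with hn | hn
    · simp [LSeries.term, hn]
    · have hterm := Complex.nonneg_iff.mp (LSeries.term_nonneg (hA0 n) (1 + a))
      push_cast at hterm
      rw [Complex.mul_re, ← hterm.2, zero_mul, sub_zero]
      exact mul_nonpos_of_nonneg_of_nonpos hterm.1 (hfδ _ (hgap n hn))
  · rw [funext (fourier_fourierChar_smul f y)]
    exact hfF.comp_sub_right y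

end WienerIkehara

section PrimePowers

theorem eventually_exists_isPrimePow_abs_log_sub_lt {δ : ℝ} (hδ : 0 < δ) :
    ∀ᶠ y : ℝ in atTop, ∃ q : ℕ, IsPrimePow q ∧ |Real.log q - y| < δ := by
  let Λ : ℕ → ℂ := fun n ↦ (ArithmeticFunction.vonMangoldt n : ℂ)
  -- With modulus 1 this is the continuous extension of `∑ Λ n n⁻ˢ - 1 / (s - 1)` to `1 ≤ re s`.
  let G := ArithmeticFunction.vonMangoldt.LFunctionResidueClassAux (1 : ZMod 1)
  have hresidue (s : ℂ) (hs : 1 < s.re) : LSeries Λ s = G s + (1 : ℝ) / (s - 1) := by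
    simp only [G, ArithmeticFunction.vonMangoldt.eqOn_LFunctionResidueClassAux isUnit_one hs]
    have : ArithmeticFunction.vonMangoldt.residueClass (1 : ZMod 1)
        = ArithmeticFunction.vonMangoldt := by
      ext n
      simp [ArithmeticFunction.vonMangoldt.residueClass, Set.indicator,
        Subsingleton.elim _ (1 : ZMod 1)]
    simp [this, Λ]
  filter_upwards [eventually_exists_ne_zero_abs_log_sub_lt (A := Λ)
    (fun s hs ↦ ArithmeticFunction.LSeriesSummable_vonMangoldt hs)
    (fun n ↦ Complex.zero_le_real.mpr ArithmeticFunction.vonMangoldt_nonneg)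
    (ArithmeticFunction.vonMangoldt.continuousOn_LFunctionResidueClassAux _) one_pos hresidue hδ]
    with y ⟨q, hq, hqy⟩
  exact ⟨q, ArithmeticFunction.vonMangoldt_ne_zero_iff.mp (Complex.ofReal_ne_zero.mp hq), hqy⟩

lemma eventually_exists_isPrimePow_mem_Icc {δ : ℝ} (hδ : 0 < δ) :
    ∀ᶠ x : ℝ in atTop, ∃ q : ℕ, IsPrimePow q ∧ (q : ℝ) ∈ Set.Icc (x * Real.exp (-δ)) x := by
  have hlim : Tendsto (fun x ↦ Real.log x - δ / 2) atTop atTop :=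
    tendsto_atTop_add_const_right _ _ Real.tendsto_log_atTop
  filter_upwards [hlim.eventually (eventually_exists_isPrimePow_abs_log_sub_lt (half_pos hδ)),
    eventually_gt_atTop 0] with x ⟨q, hq, hqx⟩ hx
  rw [abs_lt] at hqx
  have hq0 : (0 : ℝ) < q := Nat.cast_pos.mpr hq.pos
  refine ⟨q, hq, ?_, (Real.log_le_log_iff hq0 hx).mp (by linarith)⟩
  rw [← Real.log_le_log_iff (by positivity) hq0, Real.log_mul hx.ne' (Real.exp_ne_zero _),
    Real.log_exp]
  linarith

lemma eventually_exists_isPrimePow_le_sq_mul_sub_one {η : ℝ} (hη : 0 < η) :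
    ∀ᶠ x : ℝ in atTop, ∃ q : ℕ, IsPrimePow q ∧ (q : ℝ) ≤ x ∧
      (1 - η) * x ^ 3 ≤ q ^ 2 * (q - 1 : ℝ) := by
  filter_upwards [eventually_exists_isPrimePow_mem_Icc (δ := η / 6) (by positivity),
    eventually_ge_atTop (2 / η), eventually_gt_atTop 0] with x ⟨q, hq, hxq, hqx⟩ hηx hx
  refine ⟨q, hq, hqx, ?_⟩
  have hcube : (1 - η / 2) * x ^ 3 ≤ q ^ 3 :=
    calc (1 - η / 2) * x ^ 3 ≤ Real.exp (-(η / 2)) * x ^ 3 := by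
          gcongr
          linarith [Real.add_one_le_exp (-(η / 2))]
      _ = (x * Real.exp (-(η / 6))) ^ 3 := by
          rw [mul_pow, ← Real.exp_nat_mul, mul_comm]
          push_cast
          ring_nf
      _ ≤ q ^ 3 := by gcongr
  have hsq : (q : ℝ) ^ 2 ≤ η / 2 * x ^ 3 :=
    calc (q : ℝ) ^ 2 ≤ x ^ 2 := by gcongr
      _ ≤ (η / 2 * x) * x ^ 2 := le_mul_of_one_le_left (by positivity) <| by
          rw [div_le_iff₀ hη] at hηx
          linarith
      _ = η / 2 * x ^ 3 := by ring
  linarith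

lemma sq_mul_sqrt_div_pow_three {a b : ℝ} (ha : 0 ≤ a) (hb : 0 < b) :
    b ^ 2 * √(a / b) ^ 3 = √b * a ^ (3 / 2 : ℝ) := by
  have hrpow : a ^ (3 / 2 : ℝ) = √a ^ 3 := by
    rw [Real.sqrt_eq_rpow, ← Real.rpow_mul_natCast ha]
    norm_num
  have hb' : b ^ 2 = √b ^ 4 := by
    rw [show 4 = 2 * 2 from rfl, pow_mul, Real.sq_sqrt hb.le]
  have hsqrt : √b ≠ 0 := (Real.sqrt_pos.mpr hb).ne'
  rw [hrpow, hb', Real.sqrt_div ha]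
  field_simp

lemma eventually_exists_isPrimePow_mul_sq_le {k : ℕ} (hk : 0 < k) {ε : ℝ} (hε : 0 < ε) :
    ∀ᶠ n : ℕ in atTop, ∃ q : ℕ, IsPrimePow q ∧ k * q ^ 2 ≤ n ∧
      (√k / 2 - ε) * (n : ℝ) ^ (3 / 2 : ℝ) ≤ k ^ 2 * (q ^ 2 * (q - 1 : ℝ)) / 2 := by
  have hk0 : (0 : ℝ) < k := Nat.cast_pos.mpr hk
  have hlim : Tendsto (fun n : ℕ ↦ √((n : ℝ) / k)) atTop atTop :=
    Real.tendsto_sqrt_atTop.comp (tendsto_natCast_atTop_atTop.atTop_div_const hk0)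
  filter_upwards [hlim.eventually
    (eventually_exists_isPrimePow_le_sq_mul_sub_one (η := 2 * ε / √k) (by positivity))]
    with n ⟨q, hq, hqn, hqx⟩
  refine ⟨q, hq, ?_, ?_⟩
  · rw [Real.le_sqrt' (Nat.cast_pos.mpr hq.pos), le_div_iff₀' hk0] at hqn
    exact_mod_cast hqn
  · calc (√k / 2 - ε) * (n : ℝ) ^ (3 / 2 : ℝ)
        = (1 - 2 * ε / √k) * (√k * (n : ℝ) ^ (3 / 2 : ℝ)) / 2 := by field_simp
      _ = k ^ 2 * ((1 - 2 * ε / √k) * √(n / k) ^ 3) / 2 := by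
          rw [← sq_mul_sqrt_div_pow_three n.cast_nonneg hk0, mul_left_comm]
      _ ≤ k ^ 2 * (q ^ 2 * (q - 1)) / 2 := by gcongr

end PrimePowers

theorem ex_Bt_lower_odd_general (t : ℕ) (ht : 1 ≤ t) (ε : ℝ) (hε : 0 < ε) :
    ∃ N : ℕ, ∀ n : ℕ, N ≤ n → ∃ G : SimpleGraph (Fin n),
      ¬ ContainsCopy (Bgraph t) G ∧
      (Real.sqrt (((t + 1) / 2 : ℕ) : ℝ) / 2 - ε) * (n : ℝ) ^ (3/2 : ℝ)
        ≤ (G.edgeSet.ncard : ℝ) := by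
  refine eventually_atTop.mp ?_
  filter_upwards [eventually_exists_isPrimePow_mul_sq_le (k := (t + 1) / 2) (by omega) hε]
    with n ⟨q, hq, hqn, hbound⟩
  obtain ⟨G, hfree, hedge⟩ :=
    exists_not_containsCopy_Bgraph_of_isPrimePow ht (by omega) hq hqn
  refine ⟨G, hfree, hbound.trans ?_⟩
  rw [div_le_iff₀' two_pos]
  rify [hq.one_lt.le] at hedge
  exact hedge

theorem ex_Bt_lower_odd (t : ℕ) (ht : 1 ≤ t) (hodd : Odd t) (ε : ℝ) (hε : 0 < ε) :
    ∃ N : ℕ, ∀ n : ℕ, N ≤ n → ∃ G : SimpleGraph (Fin n),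
      ¬ ContainsCopy (Bgraph t) G ∧
      (Real.sqrt (((t + 1) / 2 : ℕ) : ℝ) / 2 - ε) * (n : ℝ) ^ (3/2 : ℝ)
        ≤ (G.edgeSet.ncard : ℝ) :=
  ex_Bt_lower_odd_general t ht ε hε
end

section
/- For every ε > 0 there exists N such that for all n ≥ N, every graph G on n vertices that contains no subgraph isomorphic to B_2 satisfies e(G) ≤ (2/√11 + ε)·n^{3/2}. (That is, ex(n, B_2) ≤ (2/√11)(1+o(1))·n^{3/2}.) -/
open SimpleGraph

/-!
Fix an edge `vz` of a `B₂`-free graph. The paths `v p q z` pairwise meet in an inner vertex, so if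
they have many possible first vertices, then they all pass through a common vertex `c`.

The number of pairs of edges at a common vertex is `∑ d(v)² / 2`, up to lower order terms. A pair of
vertices with at most one common neighbour accounts for at most one of them, so the excess over
`n² / 2` comes from pairs `{z, p}` with two or more common neighbours. For each vertex `v` these
pairs form a graph on `N(v)`, whose edges lie, up to `O(d(v))` of them, among its `a(v)` vertices of
large degree. Hence `∑ (d(v)² - a(v)² / 2) ≤ n² + O(e)`.

If `z` has large degree in the graph at `v` and `v` has large degree in the graph at `z`, then both
have many common neighbours with the common vertex `c` of the paths from `v` to `z`. This is rare,
so `∑ a(v)` is at most about `e = ∑ d(v) / 2`. As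
`(d - (1 - √2 / 2) a)² ≤ d² - a² / 2` for `0 ≤ a ≤ d`, the Cauchy–Schwarz inequality turns the two
estimates into `(1 + √2 / 2)² e² ≤ (1 + o(1)) n³`, that is `e ≤ (2 - √2 + o(1)) n^{3/2}`, and
`2 - √2 < 2 / √11`.
-/

namespace Bgraph

open Finset

section RealInequalities

lemma sqrt_two_le_two : √2 ≤ 2 := Real.sqrt_two_lt_three_halves.le.trans (by norm_num)

lemma seven_fifths_lt_sqrt_two : 7 / 5 < √2 := Real.lt_sqrt_of_sq_lt (by norm_num)

/-- The difference of the two sides is `(2 - √2) a (d - a)`. -/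
lemma sq_sub_mul_le_sq_sub_half_sq {a d : ℝ} (ha : 0 ≤ a) (had : a ≤ d) :
    (d - (1 - √2 / 2) * a) ^ 2 ≤ d ^ 2 - a ^ 2 / 2 := by
  have hsqrt : √2 ^ 2 = 2 := Real.sq_sqrt zero_le_two
  have hnonneg : 0 ≤ (2 - √2) * (a * (d - a)) :=
    mul_nonneg (sub_nonneg.2 sqrt_two_le_two) (mul_nonneg ha (sub_nonneg.2 had))
  linear_combination hnonneg + (a ^ 2 / 4) * hsqrt

lemma sq_sum_sub_mul_sum_le {ι : Type*} [Fintype ι] {a d : ι → ℝ} (ha : ∀ i, 0 ≤ a i)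
    (had : ∀ i, a i ≤ d i) :
    (∑ i, d i - (1 - √2 / 2) * ∑ i, a i) ^ 2
      ≤ (Fintype.card ι : ℝ) * (∑ i, d i ^ 2 - (∑ i, a i ^ 2) / 2) := by
  calc (∑ i, d i - (1 - √2 / 2) * ∑ i, a i) ^ 2
      = (∑ i, (d i - (1 - √2 / 2) * a i)) ^ 2 := by rw [sum_sub_distrib, mul_sum]
    _ ≤ (Fintype.card ι : ℝ) * ∑ i, (d i - (1 - √2 / 2) * a i) ^ 2 := sq_sum_le_card_mul_sum_sq
    _ ≤ (Fintype.card ι : ℝ) * ∑ i, (d i ^ 2 - a i ^ 2 / 2) := by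
        gcongr with i
        exact sq_sub_mul_le_sq_sub_half_sq (ha i) (had i)
    _ = _ := by rw [sum_sub_distrib, sum_div]

lemma le_add_of_sq_le_sq_add_mul {x a b : ℝ} (ha : 0 ≤ a) (hb : 0 ≤ b)
    (h : x ^ 2 ≤ a ^ 2 + b * x) : x ≤ a + b := by
  by_contra! hx
  nlinarith

lemma two_sub_sqrt_two_lt_two_div_sqrt_eleven : 2 - √2 < 2 / √11 := by
  have htwo := seven_fifths_lt_sqrt_two
  have heleven : √11 < 10 / 3 := (Real.sqrt_lt' (by norm_num)).2 (by norm_num)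
  have : 2 / (10 / 3 : ℝ) < 2 / √11 := by gcongr
  linarith

lemma le_two_mul_sub {e s t : ℝ} (he : 0 ≤ e) (ht : t ≤ 1 / 4) (hs : s ≤ (1 + t) * e) :
    e ≤ 2 * e - (1 - √2 / 2) * s := by
  have hsqrt := seven_fifths_lt_sqrt_two
  have hsqrt_le := sqrt_two_le_two
  have hs' : s ≤ 5 / 4 * e := hs.trans (by gcongr; linarith)
  nlinarith [mul_le_mul_of_nonneg_left hs' (by linarith : 0 ≤ 1 - √2 / 2)]

/-- For `t = 0` and `s = e` both sides are equal, as `(2 - √2) * (1 + √2 / 2) = 1`. -/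
lemma le_mul_two_mul_sub {e s t : ℝ} (he : 0 ≤ e) (ht : 0 ≤ t) (ht' : t ≤ 1 / 4)
    (hs : s ≤ (1 + t) * e) : e ≤ (2 - √2 + t) * (2 * e - (1 - √2 / 2) * s) := by
  have hsqrt : √2 ^ 2 = 2 := Real.sq_sqrt zero_le_two
  have hsqrt_gt := seven_fifths_lt_sqrt_two
  have hsqrt_le := sqrt_two_le_two
  calc e ≤ (2 - √2) * ((1 + √2 / 2) * e - (1 - √2 / 2) * t * e) + t * e := by
        have hte : 0 ≤ t * e := mul_nonneg ht he
        nlinarith [mul_nonneg hte (sub_nonneg.2 hsqrt_gt.le)]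
    _ = (2 - √2) * (2 * e - (1 - √2 / 2) * ((1 + t) * e)) + t * e := by ring
    _ ≤ (2 - √2) * (2 * e - (1 - √2 / 2) * s) + t * (2 * e - (1 - √2 / 2) * s) := by
        gcongr
        · linarith
        · exact le_two_mul_sub he ht' hs
    _ = (2 - √2 + t) * (2 * e - (1 - √2 / 2) * s) := by ring

lemma exists_mul_sqrt_pow_three_add_le {ε : ℝ} (hε : 0 < ε) :
    ∃ k : ℕ, 4 ≤ k ∧ ∃ N : ℕ, ∀ n : ℕ, N ≤ n →
      (2 - √2 + 1 / k) * (√n ^ 3 + (2 * k + 7) * n) ≤ (2 - √2 + ε) * (n : ℝ) ^ (3 / 2 : ℝ) := by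
  let k := max 4 ⌈2 / ε⌉₊
  have hk : 4 ≤ k := le_max_left _ _
  have hk_inv : 1 / (k : ℝ) ≤ 1 / 4 := one_div_le_one_div_of_le four_pos (mod_cast hk)
  have hkε : 1 / (k : ℝ) ≤ ε / 2 := by
    have : 2 / ε ≤ k := (Nat.le_ceil _).trans (mod_cast le_max_right _ _)
    simpa only [one_div_div] using one_div_le_one_div_of_le (by positivity) this
  refine ⟨k, hk, ⌈(2 * (2 * k + 7) / ε) ^ 2⌉₊, fun n hn => ?_⟩
  have hn_sqrt : (2 * k + 7) ≤ ε / 2 * √n := by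
    have : 2 * (2 * k + 7) / ε ≤ √n := Real.le_sqrt_of_sq_le (Nat.ceil_le.1 hn)
    rw [div_le_iff₀ hε] at this
    linarith
  have hconst : 2 - √2 + 1 / k ≤ 1 := by
    have := seven_fifths_lt_sqrt_two
    linarith
  calc (2 - √2 + 1 / k) * (√n ^ 3 + (2 * k + 7) * n)
      = (2 - √2 + 1 / k) * √n ^ 3 + (2 - √2 + 1 / k) * ((2 * k + 7) * √n ^ 2) := by
        rw [Real.sq_sqrt n.cast_nonneg]
        ring
    _ ≤ (2 - √2 + ε / 2) * √n ^ 3 + 1 * (ε / 2 * √n * √n ^ 2) := by gcongr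
    _ = (2 - √2 + ε) * √n ^ 3 := by ring
    _ = (2 - √2 + ε) * (n : ℝ) ^ (3 / 2 : ℝ) := by
        rw [Real.rpow_div_two_eq_sqrt _ n.cast_nonneg, Real.rpow_ofNat]

end RealInequalities

section Paths

variable {V : Type*} {G : SimpleGraph V} {v z p q : V}

/-- The vertices `v p q z` form a path with three edges in `G` whenever `v ≠ z`. As a relation
between the inner vertices `p` and `q`, it encodes the `4`-cycles through an edge `vz`. -/
structure ThreePath (G : SimpleGraph V) (v z p q : V) : Prop where
  adj_left : G.Adj v p
  adj_mid : G.Adj p q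
  adj_right : G.Adj q z
  left_ne : p ≠ z
  right_ne : q ≠ v

lemma ThreePath.symm (h : ThreePath G v z p q) : ThreePath G z v q p :=
  ⟨h.adj_right.symm, h.adj_mid.symm, h.adj_left.symm, h.right_ne, h.left_ne⟩

variable {p' q' : V}

lemma containsCopy_of_threePath (hvz : G.Adj v z) (h : ThreePath G v z p q)
    (h' : ThreePath G v z p' q') (hpp : p ≠ p') (hpq : p ≠ q') (hqp : q ≠ p') (hqq : q ≠ q') :
    ContainsCopy (Bgraph 2) G := by
  obtain ⟨hvp, hpq_adj, hqz, hpz, hqv⟩ := h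
  obtain ⟨hvp', hpq_adj', hqz', hpz', hqv'⟩ := h'
  refine ⟨fun x => match x with
    | (0, Sum.inl _) => v
    | (1, Sum.inl _) => z
    | (0, Sum.inr 0) => p
    | (1, Sum.inr 0) => q
    | (0, Sum.inr 1) => p'
    | (1, Sum.inr 1) => q', ?_, ?_⟩
  · have := hvz.ne
    have := hvp.ne
    have := hqz.ne
    have := hpq_adj.ne
    have := hvp'.ne
    have := hqz'.ne
    have := hpq_adj'.ne
    rintro ⟨i, x⟩ ⟨j, y⟩ hxy
    fin_cases i <;> fin_cases j <;> rcases x with x | x <;> rcases y with y | y <;>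
      fin_cases x <;> fin_cases y <;> simp_all
  · rintro ⟨i, x⟩ ⟨j, y⟩ hxy
    simp only [Bgraph, SimpleGraph.boxProd_adj, SimpleGraph.top_adj] at hxy
    fin_cases i <;> fin_cases j <;> rcases x with x | x <;> rcases y with y | y <;>
      fin_cases x <;> fin_cases y <;> simp_all [SimpleGraph.adj_comm]

lemma ThreePath.inner_inter (hG : ¬ ContainsCopy (Bgraph 2) G) (hvz : G.Adj v z)
    (h : ThreePath G v z p q) (h' : ThreePath G v z p' q') :
    p = p' ∨ p = q' ∨ q = p' ∨ q = q' := by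
  by_contra! hne
  exact hG (containsCopy_of_threePath hvz h h' hne.1 hne.2.1 hne.2.2.1 hne.2.2.2)

end Paths

section Intersecting

variable {α : Type*}

/-- Pairs that pairwise meet and do not all pass through one point form a triangle, whence at most
three first coordinates. -/
lemma exists_center_of_pairwise_inter {F : α → α → Prop}
    (hF : ∀ p q p' q', F p q → F p' q' → p = p' ∨ p = q' ∨ q = p' ∨ q = q')
    {P : Finset α} (hP : 4 ≤ #P) (hPF : ∀ p ∈ P, ∃ q, F p q) :
    ∃ c, ∀ p q, F p q → p = c ∨ q = c := by
  classical
  by_contra! hcon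
  obtain ⟨p₀, hp₀⟩ : P.Nonempty := card_pos.1 (by omega)
  obtain ⟨q₀, h₀⟩ := hPF p₀ hp₀
  obtain ⟨a, b, hab, ha, hb⟩ := hcon p₀
  obtain ⟨c, d, hcd, hc, hd⟩ := hcon q₀
  have hpairs : ∃ x, x ≠ p₀ ∧ x ≠ q₀ ∧ (F q₀ x ∨ F x q₀) ∧ (F p₀ x ∨ F x p₀) := by
    have := hF _ _ _ _ h₀ hab
    have := hF _ _ _ _ h₀ hcd
    have := hF _ _ _ _ hab hcd
    grind
  obtain ⟨x, hxp, hxq, hqx, hpx⟩ := hpairs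
  have hsub : P ⊆ {p₀, q₀, x} := by
    intro p hp
    obtain ⟨q, hpq⟩ := hPF p hp
    have := hF _ _ _ _ h₀ hpq
    simp only [mem_insert, mem_singleton]
    grind
  have := card_le_card hsub
  have := card_le_three (a := p₀) (b := q₀) (c := x)
  omega

end Intersecting

variable {V : Type*} [Fintype V]

section DegreeSums

variable {H : SimpleGraph V} [DecidableRel H.Adj]

lemma sum_natCast_degree : ∑ v, (H.degree v : ℝ) = 2 * #H.edgeFinset :=
  mod_cast H.sum_degrees_eq_twice_card_edges

lemma degree_eq_zero_of_notMem {S : Finset V} (hS : ∀ ⦃z p⦄, H.Adj z p → z ∈ S) {z : V}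
    (hz : z ∉ S) : H.degree z = 0 := by
  refine (H.degree_eq_zero_iff_notMem_support z).2 ?_
  rintro ⟨p, hzp⟩
  exact hz (hS hzp)

/-- At most `#A²` ordered adjacent pairs lie inside the set `A` of vertices of degree at least `K`;
all others have an end of degree less than `K`. -/
lemma sum_degree_le_sq_card_add {S : Finset V} (hS : ∀ ⦃z p⦄, H.Adj z p → z ∈ S) (K : ℕ) :
    ∑ z, H.degree z ≤ #{z | K ≤ H.degree z} ^ 2 + 2 * K * #S := by
  classical
  set A : Finset V := {z | K ≤ H.degree z} with hA
  have hlight : ∑ z, ∑ p, (if z ∉ A ∧ H.Adj z p then 1 else 0) ≤ K * #S := by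
    calc ∑ z, ∑ p, (if z ∉ A ∧ H.Adj z p then 1 else 0)
        ≤ ∑ z, if z ∈ S then K else 0 := by
          refine sum_le_sum fun z _ => ?_
          by_cases hz : z ∈ A
          · simp [hz]
          · simp only [hz, not_false_eq_true, true_and, ← SimpleGraph.degree_eq_sum_if_adj]
            split_ifs with hzS
            · simp only [hA, mem_filter_univ, not_le] at hz
              exact hz.le
            · exact (degree_eq_zero_of_notMem hS hzS).le
      _ = K * #S := by simp [mul_comm]
  calc ∑ z, H.degree z
      = ∑ z, ∑ p, if H.Adj z p then 1 else 0 :=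
        sum_congr rfl fun z _ => by simp only [← SimpleGraph.degree_eq_sum_if_adj, Nat.cast_id]
    _ ≤ ∑ z, ∑ p, ((if z ∈ A ∧ p ∈ A then 1 else 0) + (if z ∉ A ∧ H.Adj z p then 1 else 0)
          + if p ∉ A ∧ H.Adj p z then 1 else 0) := by
        refine sum_le_sum fun z _ => sum_le_sum fun p _ => ?_
        simp only [H.adj_comm p z]
        split_ifs <;> first | omega | tauto
    _ = #A ^ 2 + ∑ z, ∑ p, (if z ∉ A ∧ H.Adj z p then 1 else 0)
          + ∑ z, ∑ p, (if z ∉ A ∧ H.Adj z p then 1 else 0) := by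
        simp only [sum_add_distrib]
        congr 1
        · simp [ite_and, sq]
        · exact sum_comm
    _ ≤ #A ^ 2 + 2 * K * #S := by linarith

variable (H) in
lemma two_mul_sum_card_le_of_imp_adj (r : V → V → Prop) [DecidableRel r]
    (hr : ∀ ⦃v z⦄, r v z → H.Adj v z) :
    2 * ∑ v, #{z | r v z} ≤ ∑ v, H.degree v + ∑ v, #{z | r v z ∧ r z v} := by
  classical
  have hswap : ∑ v, #{z | r v z} = ∑ v, #{z | r z v} := by
    simp only [card_filter]
    exact sum_comm
  calc 2 * ∑ v, #{z | r v z}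
      = ∑ v, (#{z | r v z} + #{z | r z v}) := by rw [two_mul, sum_add_distrib, ← hswap]
    _ ≤ ∑ v, (H.degree v + #{z | r v z ∧ r z v}) := by
        refine sum_le_sum fun v _ => ?_
        rw [← card_union_add_card_inter, ← filter_or, ← filter_and,
          ← SimpleGraph.card_neighborFinset_eq_degree]
        gcongr
        intro z hz
        rw [mem_filter_univ] at hz
        exact (H.mem_neighborFinset v z).2 (hz.elim (hr ·) (hr · |>.symm))
    _ = ∑ v, H.degree v + ∑ v, #{z | r v z ∧ r z v} := sum_add_distrib

end DegreeSums

variable (G : SimpleGraph V) [DecidableRel G.Adj]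

/-- The common neighbours of `z` and `p`, as a finset; its cardinality is their codegree. -/
def commonNeighborFinset (z p : V) : Finset V := (G.commonNeighbors z p).toFinset

@[simp]
lemma mem_commonNeighborFinset {z p w : V} :
    w ∈ commonNeighborFinset G z p ↔ G.Adj z w ∧ G.Adj p w := by
  simp [commonNeighborFinset, SimpleGraph.mem_commonNeighbors]

lemma commonNeighborFinset_comm (z p : V) :
    commonNeighborFinset G z p = commonNeighborFinset G p z := by
  ext w
  simp only [mem_commonNeighborFinset, and_comm]

/-- Each value `f z p` is counted once for every common neighbour `v` of `z` and `p`. -/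
lemma sum_neighborFinset_neighborFinset (f : V → V → ℕ) :
    ∑ v, ∑ z ∈ G.neighborFinset v, ∑ p ∈ G.neighborFinset v, f z p
      = ∑ z, ∑ p, #(commonNeighborFinset G z p) * f z p := by
  calc ∑ v, ∑ z ∈ G.neighborFinset v, ∑ p ∈ G.neighborFinset v, f z p
      = ∑ z, ∑ v ∈ G.neighborFinset z, ∑ p ∈ G.neighborFinset v, f z p :=
        sum_comm' fun v z => by simp [G.adj_comm]
    _ = ∑ z, ∑ p, ∑ _v ∈ commonNeighborFinset G z p, f z p :=
        sum_congr rfl fun z _ => sum_comm' fun v p => by simp [G.adj_comm p]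
    _ = ∑ z, ∑ p, #(commonNeighborFinset G z p) * f z p := by simp only [sum_const, smul_eq_mul]

/-- The neighbours of `c` that have codegree at least `k` with `c`. -/
def rich (k : ℕ) (c : V) : Finset V :=
  {v ∈ G.neighborFinset c | k ≤ #(commonNeighborFinset G v c)}

variable {G}

lemma mem_rich {k : ℕ} {c v : V} :
    v ∈ rich G k c ↔ G.Adj c v ∧ k ≤ #(commonNeighborFinset G v c) := by
  simp [rich]

/-- If `p` were adjacent to `c`, `v` and `v'`, there would be disjoint paths `c y v p` and
`c y' v' p` over the edge `cp`. -/
lemma not_adj_of_mem_rich (hG : ¬ ContainsCopy (Bgraph 2) G) {k : ℕ} (hk : 4 ≤ k)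
    {c p v v' : V} (hv : v ∈ rich G k c) (hv' : v' ∈ rich G k c) (hne : v ≠ v')
    (hcp : G.Adj c p) (hvp : G.Adj v p) : ¬ G.Adj v' p := by
  classical
  intro hvp'
  rw [mem_rich] at hv hv'
  obtain ⟨hcv, hv⟩ := hv
  obtain ⟨hcv', hv'⟩ := hv'
  have hy_card : #{p, v'} < #(commonNeighborFinset G v c) := card_le_two.trans_lt (by omega)
  obtain ⟨y, hy, hy_ne⟩ := exists_mem_notMem_of_card_lt_card hy_card
  have hy_card' : #{p, v, y} < #(commonNeighborFinset G v' c) := card_le_three.trans_lt (by omega)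
  obtain ⟨y', hy', hy_ne'⟩ := exists_mem_notMem_of_card_lt_card hy_card'
  simp only [mem_insert, mem_singleton, not_or] at hy_ne hy_ne'
  rw [mem_commonNeighborFinset] at hy hy'
  have hpath : ThreePath G c p y v := ⟨hy.2, hy.1.symm, hvp, hy_ne.1, hcv.ne'⟩
  have hpath' : ThreePath G c p y' v' := ⟨hy'.2, hy'.1.symm, hvp', hy_ne'.1, hcv'.ne'⟩
  have := hpath.inner_inter hG hcp hpath'
  grind

lemma mul_card_rich_le (hG : ¬ ContainsCopy (Bgraph 2) G) {k : ℕ} (hk : 4 ≤ k) (c : V) :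
    k * #(rich G k c) ≤ G.degree c := by
  classical
  have hdisj : (rich G k c : Set V).PairwiseDisjoint (commonNeighborFinset G · c) := by
    intro v hv v' hv' hne
    refine Finset.disjoint_left.2 fun p hp hp' => ?_
    rw [mem_commonNeighborFinset] at hp hp'
    exact not_adj_of_mem_rich hG hk hv hv' hne hp.2 hp.1 hp'.1
  calc k * #(rich G k c) = #(rich G k c) • k := by rw [smul_eq_mul, mul_comm]
    _ ≤ ∑ v ∈ rich G k c, #(commonNeighborFinset G v c) :=
        card_nsmul_le_sum _ _ _ fun v hv => (mem_rich.1 hv).2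
    _ = #((rich G k c).biUnion (commonNeighborFinset G · c)) := (card_biUnion hdisj).symm
    _ ≤ #(G.neighborFinset c) := by
        refine card_le_card (biUnion_subset.2 fun v _ p hp => ?_)
        exact (G.mem_neighborFinset c p).2 ((mem_commonNeighborFinset G).1 hp).2

variable (G) in
/-- The graph on the neighbours of `v` that joins two of them when they have codegree at least
`t`. It is a graph on all of `V`, in which the other vertices are isolated. -/
def codegreeLink (t : ℕ) (v : V) : SimpleGraph V where
  Adj z p := G.Adj v z ∧ G.Adj v p ∧ z ≠ p ∧ t ≤ #(commonNeighborFinset G z p)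
  symm := ⟨fun z p ⟨hz, hp, hne, ht⟩ => ⟨hp, hz, hne.symm, commonNeighborFinset_comm G z p ▸ ht⟩⟩
  loopless := ⟨fun _ h => h.2.2.1 rfl⟩

@[simp]
lemma codegreeLink_adj {t : ℕ} {v z p : V} : (codegreeLink G t v).Adj z p ↔
    G.Adj v z ∧ G.Adj v p ∧ z ≠ p ∧ t ≤ #(commonNeighborFinset G z p) :=
  Iff.rfl

variable {v z p : V}

lemma threePath_of_mem_commonNeighborFinset {q : V} (hvp : G.Adj v p) (hne : z ≠ p)
    (hq : q ∈ commonNeighborFinset G z p) (hqv : q ≠ v) : ThreePath G v z p q := by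
  rw [mem_commonNeighborFinset] at hq
  exact ⟨hvp, hq.2, hq.1.symm, hne.symm, hqv⟩

lemma exists_threePath (h : (codegreeLink G 2 v).Adj z p) : ∃ q, ThreePath G v z p q := by
  obtain ⟨-, hvp, hne, hcard⟩ := h
  obtain ⟨q, hq, hqv⟩ := exists_mem_ne hcard v
  exact ⟨q, threePath_of_mem_commonNeighborFinset hvp hne hq hqv⟩

lemma exists_two_threePaths (h : (codegreeLink G 3 v).Adj z p) :
    ∃ q₁ q₂, q₁ ≠ q₂ ∧ ThreePath G v z p q₁ ∧ ThreePath G v z p q₂ := by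
  classical
  obtain ⟨-, hvp, hne, hcard⟩ := h
  have herase : 1 < #((commonNeighborFinset G z p).erase v) := by
    have := pred_card_le_card_erase (s := commonNeighborFinset G z p) (a := v)
    omega
  obtain ⟨q₁, hq₁, q₂, hq₂, hq⟩ := one_lt_card.1 herase
  rw [mem_erase] at hq₁ hq₂
  exact ⟨q₁, q₂, hq, threePath_of_mem_commonNeighborFinset hvp hne hq₁.2 hq₁.1,
    threePath_of_mem_commonNeighborFinset hvp hne hq₂.2 hq₂.1⟩

lemma mem_neighborFinset_of_codegreeLink_adj {t : ℕ} ⦃z p : V⦄ (h : (codegreeLink G t v).Adj z p) :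
    z ∈ G.neighborFinset v :=
  (G.mem_neighborFinset v z).2 h.1

section Heavy

variable [DecidableEq V]

variable (G) in
instance (t : ℕ) (v : V) : DecidableRel (codegreeLink G t v).Adj :=
  fun _ _ => decidable_of_iff _ codegreeLink_adj.symm

variable (G) in
/-- The vertices of degree at least `K` in the graph of pairs of neighbours of `v` with codegree at
least two. -/
def heavy (K : ℕ) (v : V) : Finset V := {z | K ≤ (codegreeLink G 2 v).degree z}

variable (G) in
lemma sum_degree_codegreeLink (t : ℕ) (v : V) :
    ∑ z, (codegreeLink G t v).degree z = ∑ z ∈ G.neighborFinset v, ∑ p ∈ G.neighborFinset v,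
      if z ≠ p ∧ t ≤ #(commonNeighborFinset G z p) then 1 else 0 := by
  simp only [← card_filter, ← SimpleGraph.card_neighborFinset_eq_degree,
    SimpleGraph.neighborFinset_eq_filter, codegreeLink_adj, filter_filter]
  rw [sum_filter]
  refine sum_congr rfl fun z _ => ?_
  split_ifs with hz <;> simp [hz]

lemma adj_of_mem_heavy {K : ℕ} (hK : 0 < K) (hz : z ∈ heavy G K v) : G.Adj v z := by
  rw [heavy, mem_filter_univ] at hz
  obtain ⟨p, hp⟩ := ((codegreeLink G 2 v).degree_pos_iff_exists_adj z).1 (hK.trans_le hz)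
  exact hp.1

lemma card_heavy_le_degree {K : ℕ} (hK : 0 < K) (v : V) : #(heavy G K v) ≤ G.degree v :=
  card_le_card fun _ hz => (G.mem_neighborFinset v _).2 (adj_of_mem_heavy hK hz)

lemma degree_codegreeLink_three_le (hG : ¬ ContainsCopy (Bgraph 2) G) (v z : V) :
    (codegreeLink G 3 v).degree z ≤ 3 := by
  rcases ((codegreeLink G 3 v).neighborFinset z).eq_empty_or_nonempty with hempty | ⟨p, hp⟩
  · simp [← SimpleGraph.card_neighborFinset_eq_degree, hempty]
  rw [SimpleGraph.mem_neighborFinset] at hp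
  have hvz : G.Adj v z := hp.1
  obtain ⟨q₁, q₂, hq, hpq₁, hpq₂⟩ := exists_two_threePaths hp
  have hsub : (codegreeLink G 3 v).neighborFinset z ⊆ {p, q₁, q₂} := by
    intro p' hp'
    rw [SimpleGraph.mem_neighborFinset] at hp'
    obtain ⟨r₁, r₂, hr, hpr₁, hpr₂⟩ := exists_two_threePaths hp'
    have := hpq₁.inner_inter hG hvz hpr₁
    have := hpq₁.inner_inter hG hvz hpr₂
    have := hpq₂.inner_inter hG hvz hpr₁
    have := hpq₂.inner_inter hG hvz hpr₂
    simp only [mem_insert, mem_singleton]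
    grind
  rw [← SimpleGraph.card_neighborFinset_eq_degree]
  exact (card_le_card hsub).trans card_le_three

lemma sum_degree_codegreeLink_three_le (hG : ¬ ContainsCopy (Bgraph 2) G) (v : V) :
    ∑ z, (codegreeLink G 3 v).degree z ≤ 3 * G.degree v := by
  calc ∑ z, (codegreeLink G 3 v).degree z
      = ∑ z ∈ G.neighborFinset v, (codegreeLink G 3 v).degree z :=
        (sum_subset (subset_univ _) fun z _ =>
          degree_eq_zero_of_notMem mem_neighborFinset_of_codegreeLink_adj).symm
    _ ≤ #(G.neighborFinset v) • 3 :=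
        sum_le_card_nsmul _ _ _ fun z _ => degree_codegreeLink_three_le hG v z
    _ = 3 * G.degree v := mul_comm _ _

lemma exists_common_inner_vertex (hG : ¬ ContainsCopy (Bgraph 2) G) (hz : z ∈ heavy G 4 v) :
    ∃ c, ∀ p q, ThreePath G v z p q → p = c ∨ q = c := by
  have hvz := adj_of_mem_heavy four_pos hz
  rw [heavy, mem_filter_univ] at hz
  refine exists_center_of_pairwise_inter (P := (codegreeLink G 2 v).neighborFinset z)
    (fun p q p' q' h h' => h.inner_inter hG hvz h') hz fun p hp => exists_threePath ?_
  exact (SimpleGraph.mem_neighborFinset _ _ _).1 hp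

lemma mem_rich_of_mem_heavy {k : ℕ} (hz : z ∈ heavy G (k + 1) v) {c : V} (hvc : G.Adj v c)
    (hc : ∀ p q, ThreePath G v z p q → p = c ∨ q = c) : v ∈ rich G k c := by
  rw [heavy, mem_filter_univ, ← SimpleGraph.card_neighborFinset_eq_degree] at hz
  refine mem_rich.2 ⟨hvc.symm, ?_⟩
  calc k ≤ #(((codegreeLink G 2 v).neighborFinset z).erase c) := by
        have := pred_card_le_card_erase (s := (codegreeLink G 2 v).neighborFinset z) (a := c)
        omega
    _ ≤ #(commonNeighborFinset G v c) := by
        refine card_le_card fun p hp => ?_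
        rw [mem_erase, SimpleGraph.mem_neighborFinset] at hp
        obtain ⟨q, hpq⟩ := exists_threePath hp.2
        obtain rfl : q = c := (hc p q hpq).resolve_left hp.1
        exact (mem_commonNeighborFinset G).2 ⟨hpq.adj_left, hpq.adj_mid.symm⟩

lemma adj_of_mem_heavy_of_center {K : ℕ} (hK : 2 ≤ K) (hz : z ∈ heavy G K v) {c : V}
    (hc : ∀ p q, ThreePath G v z p q → p = c ∨ q = c) : G.Adj c z := by
  rw [heavy, mem_filter_univ, ← SimpleGraph.card_neighborFinset_eq_degree] at hz
  obtain ⟨p, hp, hpc⟩ := exists_mem_ne (hK.trans hz) c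
  obtain ⟨q, hpq⟩ := exists_threePath ((SimpleGraph.mem_neighborFinset _ _ _).1 hp)
  obtain rfl : q = c := (hc p q hpq).resolve_left hpc
  exact hpq.adj_right

lemma exists_mem_rich_of_mem_heavy_of_mem_heavy (hG : ¬ ContainsCopy (Bgraph 2) G) {k : ℕ}
    (hk : 3 ≤ k) (hz : z ∈ heavy G (k + 1) v) (hv : v ∈ heavy G (k + 1) z) :
    ∃ c, v ∈ rich G k c ∧ z ∈ rich G k c := by
  have hz₄ : z ∈ heavy G 4 v := by
    rw [heavy, mem_filter_univ] at hz ⊢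
    omega
  obtain ⟨c, hc⟩ := exists_common_inner_vertex hG hz₄
  have hc' : ∀ p q, ThreePath G z v p q → p = c ∨ q = c := fun p q h => (hc q p h.symm).symm
  have hcz := adj_of_mem_heavy_of_center (by omega) hz hc
  have hcv := adj_of_mem_heavy_of_center (by omega) hv hc'
  exact ⟨c, mem_rich_of_mem_heavy hz hcv.symm hc, mem_rich_of_mem_heavy hv hcz.symm hc'⟩

lemma card_mutually_heavy_le (hG : ¬ ContainsCopy (Bgraph 2) G) {k : ℕ} (hk : 4 ≤ k)
    (v : V) : #{z | z ∈ heavy G (k + 1) v ∧ v ∈ heavy G (k + 1) z} ≤ #{c | v ∈ rich G k c} := by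
  refine card_le_card_of_forall_subsingleton (fun z c => z ∈ rich G k c) (fun z hz => ?_) ?_
  · rw [mem_filter_univ] at hz
    obtain ⟨c, hv, hzc⟩ := exists_mem_rich_of_mem_heavy_of_mem_heavy hG (by omega) hz.1 hz.2
    exact ⟨c, mem_filter_univ _ |>.2 hv, hzc⟩
  · rintro c hv z ⟨hz, hzc⟩ z' ⟨hz', hzc'⟩
    rw [mem_filter_univ] at hv hz hz'
    by_contra hne
    exact not_adj_of_mem_rich hG hk hzc hzc' hne (mem_rich.1 hv).1
      (adj_of_mem_heavy k.succ_pos hz.2) (adj_of_mem_heavy k.succ_pos hz'.2)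

lemma mul_sum_card_mutually_heavy_le (hG : ¬ ContainsCopy (Bgraph 2) G) {k : ℕ} (hk : 4 ≤ k) :
    k * ∑ v, #{z | z ∈ heavy G (k + 1) v ∧ v ∈ heavy G (k + 1) z} ≤ ∑ v, G.degree v := by
  calc k * ∑ v, #{z | z ∈ heavy G (k + 1) v ∧ v ∈ heavy G (k + 1) z}
      ≤ k * ∑ v, #{c | v ∈ rich G k c} := by
        exact Nat.mul_le_mul_left k (sum_le_sum fun v _ => card_mutually_heavy_le hG hk v)
    _ = k * ∑ c, #(rich G k c) := by
        congr 1
        simpa [bipartiteAbove, bipartiteBelow] using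
          sum_card_bipartiteAbove_eq_sum_card_bipartiteBelow (s := univ) (t := univ)
            (fun v c : V => v ∈ rich G k c)
    _ ≤ ∑ c, G.degree c := by
        rw [mul_sum]
        exact sum_le_sum fun c _ => mul_card_rich_le hG hk c

lemma two_mul_mul_sum_card_heavy_le (hG : ¬ ContainsCopy (Bgraph 2) G) {k : ℕ} (hk : 4 ≤ k) :
    2 * k * ∑ v, #(heavy G (k + 1) v) ≤ (k + 1) * ∑ v, G.degree v := by
  have hheavy := two_mul_sum_card_le_of_imp_adj G (fun v z => z ∈ heavy G (k + 1) v)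
    fun _ _ => adj_of_mem_heavy k.succ_pos
  simp only [filter_univ_mem] at hheavy
  calc 2 * k * ∑ v, #(heavy G (k + 1) v) = k * (2 * ∑ v, #(heavy G (k + 1) v)) := by ring
    _ ≤ k * (∑ v, G.degree v
          + ∑ v, #{z | z ∈ heavy G (k + 1) v ∧ v ∈ heavy G (k + 1) z}) := by gcongr
    _ ≤ (k + 1) * ∑ v, G.degree v := by linarith [mul_sum_card_mutually_heavy_le hG hk]

variable (G) in
/-- The weight that makes `two_mul_codegree_le` hold: a multiple of the indicator of the diagonal
plus the indicators of codegree at least two and at least three. -/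
def pairWeight (z p : V) : ℕ :=
  (if z = p then 2 else 0) + (if z ≠ p ∧ 2 ≤ #(commonNeighborFinset G z p) then 1 else 0)
    + if z ≠ p ∧ 3 ≤ #(commonNeighborFinset G z p) then 1 else 0

lemma two_mul_codegree_le (z p : V) : 2 * #(commonNeighborFinset G z p)
    ≤ 2 + #(commonNeighborFinset G z p) * pairWeight G z p := by
  rw [pairWeight]
  by_cases hzp : z = p
  · simp only [hzp, ne_eq, not_true_eq_false, false_and, if_true, if_false]
    omega
  · simp only [hzp, ne_eq, not_false_eq_true, true_and, if_false]
    split_ifs <;> omega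

lemma sum_pairWeight_le (hG : ¬ ContainsCopy (Bgraph 2) G) (K : ℕ) (v : V) :
    ∑ z ∈ G.neighborFinset v, ∑ p ∈ G.neighborFinset v, pairWeight G z p
      ≤ #(heavy G K v) ^ 2 + (2 * K + 5) * G.degree v := by
  have hdiag : ∑ z ∈ G.neighborFinset v, ∑ p ∈ G.neighborFinset v, (if z = p then 2 else 0)
      = 2 * G.degree v := by
    simp only [sum_ite_eq]
    rw [sum_ite_mem, inter_self, sum_const, smul_eq_mul,
      SimpleGraph.card_neighborFinset_eq_degree, mul_comm]
  have htwo : ∑ z, (codegreeLink G 2 v).degree z ≤ #(heavy G K v) ^ 2 + 2 * K * G.degree v :=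
    sum_degree_le_sq_card_add mem_neighborFinset_of_codegreeLink_adj K
  have hthree := sum_degree_codegreeLink_three_le hG v
  simp only [pairWeight, sum_add_distrib, hdiag, ← sum_degree_codegreeLink]
  linarith

lemma two_mul_sum_sq_degree_le (hG : ¬ ContainsCopy (Bgraph 2) G) (K : ℕ) :
    2 * ∑ v, G.degree v ^ 2
      ≤ 2 * Fintype.card V ^ 2 + ∑ v, #(heavy G K v) ^ 2 + (2 * K + 5) * ∑ v, G.degree v := by
  have hsq : ∑ v, G.degree v ^ 2 = ∑ z, ∑ p, #(commonNeighborFinset G z p) := by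
    simpa [sq] using sum_neighborFinset_neighborFinset G fun _ _ => 1
  calc 2 * ∑ v, G.degree v ^ 2
      ≤ ∑ z, ∑ p, (2 + #(commonNeighborFinset G z p) * pairWeight G z p) := by
        rw [hsq]
        simp only [mul_sum]
        exact sum_le_sum fun z _ => sum_le_sum fun p _ => two_mul_codegree_le z p
    _ = 2 * Fintype.card V ^ 2
          + ∑ v, ∑ z ∈ G.neighborFinset v, ∑ p ∈ G.neighborFinset v, pairWeight G z p := by
        rw [sum_neighborFinset_neighborFinset]
        simp only [sum_add_distrib, sum_const, card_univ, smul_eq_mul]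
        ring
    _ ≤ 2 * Fintype.card V ^ 2 + ∑ v, (#(heavy G K v) ^ 2 + (2 * K + 5) * G.degree v) := by
        gcongr with v
        exact sum_pairWeight_le hG K v
    _ = _ := by rw [sum_add_distrib, ← mul_sum, add_assoc]

lemma sum_card_heavy_le (hG : ¬ ContainsCopy (Bgraph 2) G) {k : ℕ} (hk : 4 ≤ k) :
    ∑ v, (#(heavy G (k + 1) v) : ℝ) ≤ (1 + 1 / k) * #G.edgeFinset := by
  have hk_pos : (0 : ℝ) < k := by positivity
  have hheavy : 2 * k * ∑ v, (#(heavy G (k + 1) v) : ℝ) ≤ (k + 1) * ∑ v, (G.degree v : ℝ) :=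
    mod_cast two_mul_mul_sum_card_heavy_le hG hk
  rw [sum_natCast_degree] at hheavy
  field_simp
  linarith

lemma sum_sq_degree_sub_le (hG : ¬ ContainsCopy (Bgraph 2) G) (k : ℕ) :
    ∑ v, (G.degree v : ℝ) ^ 2 - (∑ v, (#(heavy G (k + 1) v) : ℝ) ^ 2) / 2
      ≤ (Fintype.card V : ℝ) ^ 2 + (2 * k + 7) * #G.edgeFinset := by
  have hsq : 2 * ∑ v, (G.degree v : ℝ) ^ 2
      ≤ 2 * (Fintype.card V : ℝ) ^ 2 + ∑ v, (#(heavy G (k + 1) v) : ℝ) ^ 2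
        + (2 * (k + 1) + 5) * ∑ v, (G.degree v : ℝ) :=
    mod_cast two_mul_sum_sq_degree_le hG (k + 1)
  rw [sum_natCast_degree] at hsq
  linarith

end Heavy

/-- Letting `k` grow with `n` makes the right hand side `(2 - √2 + o(1)) n^{3/2}`. -/
lemma card_edgeFinset_le (hG : ¬ ContainsCopy (Bgraph 2) G) {k : ℕ} (hk : 4 ≤ k) :
    (#G.edgeFinset : ℝ)
      ≤ (2 - √2 + 1 / k) * (√(Fintype.card V) ^ 3 + (2 * k + 7) * Fintype.card V) := by
  classical
  have hsum := sum_card_heavy_le hG hk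
  have hsq := sum_sq_degree_sub_le hG k
  have hdeg := sum_natCast_degree (H := G)
  set e : ℝ := (#G.edgeFinset : ℝ)
  set n : ℝ := (Fintype.card V : ℝ)
  set s : ℝ := ∑ v, (#(heavy G (k + 1) v) : ℝ)
  have hk_inv : 1 / (k : ℝ) ≤ 1 / 4 := one_div_le_one_div_of_le four_pos (mod_cast hk)
  have hex := le_two_mul_sub (by positivity) hk_inv hsum
  have hex' := le_mul_two_mul_sub (by positivity) (by positivity) hk_inv hsum
  set x : ℝ := 2 * e - (1 - √2 / 2) * s with hx
  have hcauchy : x ^ 2 ≤ (√n ^ 3) ^ 2 + (2 * k + 7) * n * x := by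
    calc x ^ 2 ≤ n * (n ^ 2 + (2 * k + 7) * e) := by
          rw [hx, ← hdeg]
          refine (sq_sum_sub_mul_sum_le (fun v => by positivity) fun v => ?_).trans (by gcongr)
          exact mod_cast card_heavy_le_degree k.succ_pos v
      _ = (√n ^ 2) ^ 3 + (2 * k + 7) * n * e := by rw [Real.sq_sqrt (by positivity)]; ring
      _ ≤ (√n ^ 3) ^ 2 + (2 * k + 7) * n * x := by rw [pow_right_comm]; gcongr
  have hx_le := le_add_of_sq_le_sq_add_mul (by positivity) (by positivity) hcauchy
  have hcoef : 0 ≤ 2 - √2 + 1 / k := add_nonneg (sub_nonneg.2 sqrt_two_le_two) (by positivity)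
  exact hex'.trans (mul_le_mul_of_nonneg_left hx_le hcoef)

end Bgraph

theorem ex_B2_upper_general (ε : ℝ) (hε : 0 < ε) :
    ∃ N : ℕ, ∀ (V : Type*) [Fintype V], N ≤ Fintype.card V → ∀ G : SimpleGraph V,
      ¬ ContainsCopy (Bgraph 2) G →
      (G.edgeSet.ncard : ℝ) ≤ (2 - √2 + ε) * (Fintype.card V : ℝ) ^ (3/2 : ℝ) := by
  classical
  obtain ⟨k, hk, N, hN⟩ := Bgraph.exists_mul_sqrt_pow_three_add_le hε
  refine ⟨N, fun V _ hV G hG => ?_⟩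
  rw [← G.coe_edgeFinset, Set.ncard_coe_finset]
  exact (Bgraph.card_edgeFinset_le hG hk).trans (hN _ hV)

theorem ex_B2_upper (ε : ℝ) (hε : 0 < ε) :
    ∃ N : ℕ, ∀ n : ℕ, N ≤ n → ∀ G : SimpleGraph (Fin n),
      ¬ ContainsCopy (Bgraph 2) G →
      (G.edgeSet.ncard : ℝ) ≤ (2 / Real.sqrt 11 + ε) * (n : ℝ) ^ (3/2 : ℝ) := by
  have hgap := sub_pos.2 Bgraph.two_sub_sqrt_two_lt_two_div_sqrt_eleven
  obtain ⟨N, hN⟩ := ex_B2_upper_general _ (add_pos hgap hε)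
  refine ⟨N, fun n hn G hG => ?_⟩
  simpa [← add_assoc] using hN (Fin n) (by simpa using hn) G hG
end
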